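/- arXiv:1310.4717 — 2 statements merged into one kernel-verified Lean document; each statement's English description precedes it below -/
import Mathlib

section
/- Let G be a finite connected nonbipartite simple graph on n vertices with domination number γ(G). Then G has a spanning subgraph H (on the same vertex set, with E(H) ⊆ E(G)) such that H is connected and unicyclic, the girth of H (the length of a shortest cycle of H) equals the odd girth of G, and γ(H) = γ(G). -/
open scoped Classical

/-- `D` is a dominating set of `G`: every vertex not in `D` is adjacent to a vertex of `D`. -/
def IsDominatingSet {V : Type*} [Fintype V] (G : SimpleGraph V) (D : Finset V) : Prop :=
  ∀ v, v ∉ D → ∃ u ∈ D, G.Adj u v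

/-- The domination number of `G`: minimum cardinality of a dominating set. -/
noncomputable def dominationNumber {V : Type*} [Fintype V] (G : SimpleGraph V) : ℕ :=
  sInf {k | ∃ D : Finset V, IsDominatingSet G D ∧ D.card = k}

/-- The girth of `G`: the length of a shortest cycle. -/
noncomputable def girthNat {V : Type*} (G : SimpleGraph V) : ℕ :=
  sInf {k | ∃ (v : V) (w : G.Walk v v), w.IsCycle ∧ w.length = k}

/-- The odd girth of `G`: the length of a shortest odd cycle. -/
noncomputable def oddGirthNat {V : Type*} (G : SimpleGraph V) : ℕ :=
  sInf {k | Odd k ∧ ∃ (v : V) (w : G.Walk v v), w.IsCycle ∧ w.length = k}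

/-!
Fix a minimum dominating set `D` and, among the shortest odd closed walks of `G`, a walk `C` that
misses as few vertices of `D` as possible. Let `H` be a minimal connected spanning subgraph of `G`
that contains `C` and is still dominated by `D`. By minimality, an edge of `H` outside `C` that is
not a bridge joins a vertex of `D` to one of its private neighbours.

Suppose a cycle `Z` of `H` leaves `C` at a vertex `x`, with neighbours `a` and `b` on `Z`. If
`x ∉ D`, then `x` would be a private neighbour of both `a` and `b`. So `x ∈ D`, its private
neighbours `a` and `b` lie on `C`, and since `C` is a shortest odd closed walk they are joined by an
arc of `C` of length two. Rerouting that arc through `x` covers one more vertex of `D`,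
because the midpoint of the arc, a neighbour of `a` other than `x`, is not in `D`. This contradicts
the choice of `C`. Hence `Z` stays on the vertices of `C`, which is chordless, and `C` is the only
cycle of `H`.
-/

open SimpleGraph

section UniqueCycle

variable {V : Type*} {G H : SimpleGraph V} {u v a b x y : V} {D : Finset V}

/-! ### Graphs with a single cycle -/

lemma toSubgraph_le_of_neighborSet_subset {S : G.Subgraph} (W : G.Walk u v) (hu : u ∈ S.verts)
    (h : ∀ x ∈ S.verts, W.toSubgraph.neighborSet x ⊆ S.neighborSet x) : W.toSubgraph ≤ S := by
  induction W with
  | nil => simpa [Walk.toSubgraph] using hu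
  | @cons u w v huw p ih =>
    have hS : S.Adj u w := h u hu (by simp [Walk.toSubgraph])
    refine sup_le (subgraphOfAdj_le_of_adj S hS) (ih (S.edge_vert hS.symm) fun x hx y hy => ?_)
    exact h x hx (Or.inr hy)

lemma toSubgraph_eq_of_isCycle_of_le {Z : G.Walk u u} {C : G.Walk v v} (hZ : Z.IsCycle)
    (hC : C.IsCycle) (hZC : Z.toSubgraph ≤ C.toSubgraph) : Z.toSubgraph = C.toSubgraph := by
  have hsupp : ∀ x ∈ Z.support, x ∈ C.support := fun x hx =>
    C.mem_verts_toSubgraph.1 (hZC.1 (Z.mem_verts_toSubgraph.2 hx))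
  have hu := hsupp u Z.start_mem_support
  refine le_antisymm hZC ?_
  rw [← C.toSubgraph_rotate hu]
  refine toSubgraph_le_of_neighborSet_subset _ Z.start_mem_verts_toSubgraph fun x hx => ?_
  rw [Z.mem_verts_toSubgraph] at hx
  rw [C.toSubgraph_rotate hu]
  have hN : Z.toSubgraph.neighborSet x ⊆ C.toSubgraph.neighborSet x := fun y hy => hZC.2 hy
  refine (Set.eq_of_subset_of_ncard_le hN ?_ C.finite_neighborSet_toSubgraph).ge
  rw [hZ.ncard_neighborSet_toSubgraph_eq_two hx,
    hC.ncard_neighborSet_toSubgraph_eq_two (hsupp x hx)]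

/-- `C` is the only cycle of `G`, up to its starting point and orientation. -/
def IsUniqueCycle (C : G.Walk v v) : Prop :=
  C.IsCycle ∧ ∀ ⦃u : V⦄ (Z : G.Walk u u), Z.IsCycle → Z.toSubgraph = C.toSubgraph

namespace IsUniqueCycle

variable {C : G.Walk v v}

lemma mem_edges_iff (hC : IsUniqueCycle C) {Z : G.Walk u u} (hZ : Z.IsCycle) {e : Sym2 V} :
    e ∈ Z.edges ↔ e ∈ C.edges := by
  rw [← Z.mem_edges_toSubgraph, hC.2 Z hZ, C.mem_edges_toSubgraph]

lemma length_eq (hC : IsUniqueCycle C) {Z : G.Walk u u} (hZ : Z.IsCycle) :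
    Z.length = C.length := by
  rw [← Z.length_edges, ← C.length_edges]
  exact ((List.perm_ext_iff_of_nodup hZ.edges_nodup hC.1.edges_nodup).2
    fun _ => hC.mem_edges_iff hZ).length_eq

lemma girthNat_eq (hC : IsUniqueCycle C) : girthNat G = C.length := by
  have : {k | ∃ (u : V) (Z : G.Walk u u), Z.IsCycle ∧ Z.length = k} = {C.length} := by
    ext k
    constructor
    · rintro ⟨u, Z, hZ, rfl⟩
      exact hC.length_eq hZ
    · rintro rfl
      exact ⟨v, C, hC.1, rfl⟩
  rw [girthNat, this, csInf_singleton]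

lemma isTree_deleteEdges (hC : IsUniqueCycle C) (hG : G.Connected) (hxy : s(x, y) ∈ C.edges) :
    (G.deleteEdges {s(x, y)}).IsTree := by
  refine ⟨hG.connected_delete_edge_of_not_isBridge fun h => h.notMem_edges_of_isCycle hC.1 hxy,
    fun u Z hZ => ?_⟩
  have hZe : s(x, y) ∈ Z.edges := by
    simpa using (hC.mem_edges_iff (hZ.mapLe (G.deleteEdges_le _))).2 hxy
  simpa using Z.edges_subset_edgeSet hZe

lemma ncard_edgeSet [Finite V] (hC : IsUniqueCycle C) (hG : G.Connected) :
    G.edgeSet.ncard = Nat.card V := by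
  have he := C.mk_start_snd_mem_edges hC.1.not_nil
  have hcard := (isTree_iff_connected_and_card.1 (hC.isTree_deleteEdges hG he)).2
  rwa [Nat.card_coe_set_eq, edgeSet_deleteEdges,
    Set.ncard_sdiff_singleton_add_one (C.edges_subset_edgeSet he)] at hcard

end IsUniqueCycle

/-! ### Shortest odd closed walks -/

/-- `C` has odd length, and no odd closed walk of `G` is shorter. The length of such a walk is
the odd girth of `G`. -/
def IsShortestOddClosed (C : G.Walk v v) : Prop :=
  Odd C.length ∧ ∀ ⦃u : V⦄ (W : G.Walk u u), Odd W.length → C.length ≤ W.length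

namespace IsShortestOddClosed

variable {C : G.Walk v v}

lemma transfer (hC : IsShortestOddClosed C) (hHG : H ≤ G) (hCH : ∀ e ∈ C.edges, e ∈ H.edgeSet) :
    IsShortestOddClosed (C.transfer H hCH) :=
  ⟨by simpa using hC.1, fun u W hW => by simpa using hC.2 (W.mapLe hHG) (by simpa using hW)⟩

lemma three_le_length (hC : IsShortestOddClosed C) : 3 ≤ C.length := by
  have hne : C.length ≠ 1 := fun h => G.loopless.irrefl v (Walk.adj_of_length_eq_one h)
  obtain ⟨k, hk⟩ := hC.1
  omega

-- Cutting a closed subwalk out of `C` leaves a closed walk, and one of the two pieces is odd.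
lemma isCycle (hC : IsShortestOddClosed C) : C.IsCycle := by
  have hnil : ¬ C.Nil := fun h => by
    have := hC.three_le_length
    rw [Walk.length_eq_zero_iff.2 h] at this
    omega
  refine Walk.isCycle_iff_isPath_tail_and_le_length.2 ⟨?_, hC.three_le_length⟩
  rw [Walk.isPath_iff_isSubwalk_imp_nil]
  rintro w l ⟨p, q, hpq⟩
  have hlen : C.length = p.length + l.length + q.length + 1 := by
    rw [← C.length_tail_add_one hnil, hpq, Walk.length_append, Walk.length_append]
  have hl := hC.2 l
  have hrest := hC.2 (.cons (C.adj_snd hnil) (p.append q))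
  rw [Walk.length_cons, Walk.length_append] at hrest
  have hodd := hC.1
  rw [Nat.odd_iff] at hl hrest hodd
  rw [← Walk.length_eq_zero_iff]
  omega

lemma oddGirthNat_eq (hC : IsShortestOddClosed C) : oddGirthNat G = C.length := by
  have hmem : C.length ∈ {k | Odd k ∧ ∃ (u : V) (W : G.Walk u u), W.IsCycle ∧ W.length = k} :=
    ⟨hC.1, v, C, hC.isCycle, rfl⟩
  refine le_antisymm (Nat.sInf_le hmem) (le_csInf ⟨_, hmem⟩ ?_)
  rintro k ⟨hk, u, W, -, rfl⟩
  exact hC.2 W hk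

-- The two arcs of `C` between `a` and `b` have lengths of different parity, so one of them has the
-- parity of `W`, and closing `W` up with the other arc gives an odd closed walk.
lemma exists_arc_of_walk (hC : IsShortestOddClosed C) (ha : a ∈ C.support) (hb : b ∈ C.support)
    (W : G.Walk a b) : ∃ (p : G.Walk a b) (q : G.Walk b a),
      p.length ≤ W.length ∧ (Even p.length ↔ Even W.length) ∧
      p.length + q.length = C.length ∧ p.toSubgraph ⊔ q.toSubgraph = C.toSubgraph := by
  have hb' : b ∈ (C.rotate a ha).support := (C.mem_support_rotate_iff a ha).2 hb
  obtain ⟨p, q, hpq⟩ : ∃ (p : G.Walk a b) (q : G.Walk b a), p.append q = C.rotate a ha :=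
    ⟨_, _, Walk.take_spec _ hb'⟩
  have hlen : p.length + q.length = C.length := by
    rw [← Walk.length_append, hpq, Walk.length_rotate]
  have hsub : p.toSubgraph ⊔ q.toSubgraph = C.toSubgraph := by
    rw [← Walk.toSubgraph_append, hpq, Walk.toSubgraph_rotate]
  have hodd := hC.1
  have hp := hC.2 (p.append W.reverse)
  have hq := hC.2 (W.append q)
  rw [Walk.length_append, Walk.length_reverse, Nat.odd_iff] at hp
  rw [Walk.length_append, Nat.odd_iff] at hq
  rw [Nat.odd_iff] at hodd
  by_cases hpar : Even p.length ↔ Even W.length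
  · refine ⟨p, q, ?_, hpar, hlen, hsub⟩
    rw [Nat.even_iff, Nat.even_iff] at hpar
    omega
  · refine ⟨q.reverse, p.reverse, ?_, ?_, ?_, ?_⟩
    · rw [Nat.even_iff, Nat.even_iff] at hpar
      rw [Walk.length_reverse]
      omega
    · rw [Nat.even_iff, Nat.even_iff] at hpar
      rw [Walk.length_reverse, Nat.even_iff, Nat.even_iff]
      omega
    · rw [Walk.length_reverse, Walk.length_reverse, add_comm, hlen]
    · rw [Walk.toSubgraph_reverse, Walk.toSubgraph_reverse, sup_comm, hsub]

lemma isChordless (hC : IsShortestOddClosed C) : C.IsChordless := by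
  rw [← Walk.isInduced_toSubgraph]
  intro a ha b hb hab
  rw [Walk.mem_verts_toSubgraph] at ha hb
  obtain ⟨p, q, hle, hpar, -, hsub⟩ := hC.exists_arc_of_walk ha hb hab.toWalk
  rw [← hsub]
  rcases p with _ | ⟨_, _ | _⟩
  · simp at hpar
  · exact Or.inl (by simp [Walk.toSubgraph])
  · simp at hle

end IsShortestOddClosed

/-- No closed walk of `G` of the same length as `C` misses fewer vertices of `D` than `C`. -/
def MissesFewest (D : Finset V) (C : G.Walk v v) : Prop :=
  ∀ ⦃u : V⦄ (W : G.Walk u u), W.length = C.length →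
    (D \ C.support.toFinset).card ≤ (D \ W.support.toFinset).card

lemma MissesFewest.transfer {C : G.Walk v v} (hC : MissesFewest D C) (hHG : H ≤ G)
    (hCH : ∀ e ∈ C.edges, e ∈ H.edgeSet) : MissesFewest D (C.transfer H hCH) :=
  fun u W hW => by simpa using hC (W.mapLe hHG) (by simpa using hW)

lemma exists_isShortestOddClosed_missesFewest (hG : ¬ G.Colorable 2) (D : Finset V) :
    ∃ (v : V) (C : G.Walk v v), IsShortestOddClosed C ∧ MissesFewest D C := by
  have hodd : ∃ W : Σ u, G.Walk u u, Odd W.2.length := by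
    simp only [two_colorable_iff_forall_loop_even, not_forall, Nat.not_even_iff_odd] at hG
    obtain ⟨u, W, hW⟩ := hG
    exact ⟨⟨u, W⟩, hW⟩
  obtain ⟨⟨w, B⟩, hB⟩ := exists_minimalFor_of_wellFoundedLT
    (fun W : Σ u, G.Walk u u => Odd W.2.length) (fun W => W.2.length) hodd
  obtain ⟨⟨v, C⟩, hC⟩ := exists_minimalFor_of_wellFoundedLT
    (fun W : Σ u, G.Walk u u => W.2.length = B.length)
    (fun W => (D \ W.2.support.toFinset).card) ⟨⟨w, B⟩, rfl⟩
  have hlen : C.length = B.length := hC.1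
  refine ⟨v, C, ⟨hlen ▸ hB.1, fun u W hW => ?_⟩, fun u W hW => ?_⟩
  · exact hlen ▸ not_lt.1 fun h => hB.not_lt (j := ⟨u, W⟩) hW h
  · exact not_lt.1 fun h => hC.not_lt (j := ⟨u, W⟩) (hW.trans hlen) h

-- Otherwise rerouting the arc `a, z, b` of `C` through `x` covers `x` at the expense of `z ∉ D`.
lemma exists_mem_support_adj_of_common_neighbor {C : G.Walk v v} (hC : IsShortestOddClosed C)
    (hmiss : MissesFewest D C) (hx : x ∈ D) (hxC : x ∉ C.support) (ha : a ∈ C.support)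
    (hb : b ∈ C.support) (hab : a ≠ b) (hxa : G.Adj x a) (hxb : G.Adj x b) :
    ∃ z ∈ C.support, z ∈ D ∧ G.Adj z a := by
  obtain ⟨p, q, hle, hpar, hlen, hsub⟩ := hC.exists_arc_of_walk ha hb (.cons hxa.symm hxb.toWalk)
  have hsupp : ∀ w, w ∈ C.support ↔ w ∈ p.support ∨ w ∈ q.support := fun w => by
    simp only [← Walk.mem_verts_toSubgraph, ← hsub, Subgraph.verts_sup, Set.mem_union]
  match p with
  | .nil => exact absurd rfl hab
  | .cons _ .nil => simp at hpar
  | .cons _ (.cons _ (.cons _ _)) => simp at hle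
  | @Walk.cons _ _ _ z _ haz (.cons hzb .nil) =>
    refine ⟨z, (hsupp z).2 (by simp), ?_, haz.symm⟩
    by_contra hz
    have hcard := hmiss (Walk.cons hxa.symm (.cons hxb q))
      (by simp only [Walk.length_cons, Walk.length_nil] at hlen ⊢; omega)
    refine hcard.not_gt (Finset.card_lt_card ((Finset.ssubset_iff_of_subset ?_).2 ⟨x, ?_, ?_⟩))
    · intro w hw
      simp only [Finset.mem_sdiff, List.mem_toFinset, Walk.support_cons, List.mem_cons,
        not_or] at hw ⊢
      refine ⟨hw.1, fun hwC => ?_⟩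
      rcases (hsupp w).1 hwC with hwp | hwq
      · simp only [Walk.support_cons, Walk.support_nil, List.mem_cons, List.not_mem_nil,
          or_false] at hwp
        rcases hwp with rfl | rfl | rfl
        · exact hw.2.1 rfl
        · exact hz hw.1
        · exact hw.2.2.2 q.start_mem_support
      · exact hw.2.2.2 hwq
    · simp [hx, hxC]
    · simp

/-! ### Private neighbours and minimal dominated subgraphs -/

/-- `y` is an external private neighbour of `x` with respect to `D`: it lies outside `D`, and `x`
is its only neighbour in `D`. -/
def IsPrivateNeighbor (G : SimpleGraph V) (D : Finset V) (x y : V) : Prop :=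
  y ∉ D ∧ G.neighborSet y ∩ D = {x}

namespace IsPrivateNeighbor

lemma mem (h : IsPrivateNeighbor G D x y) : x ∈ D :=
  (h.2.ge rfl).2

lemma eq_of_adj (h : IsPrivateNeighbor G D x y) (ha : a ∈ D) (hay : G.Adj a y) : a = x :=
  h.2.le ⟨hay.symm, ha⟩

end IsPrivateNeighbor

namespace IsDominatingSet

variable [Fintype V]

lemma mono (hHG : H ≤ G) (hD : IsDominatingSet H D) : IsDominatingSet G D := fun v hv =>
  let ⟨u, hu, huv⟩ := hD v hv
  ⟨u, hu, hHG huv⟩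

lemma isPrivateNeighbor_or (hD : IsDominatingSet G D)
    (hdel : ¬ IsDominatingSet (G.deleteEdges {s(x, y)}) D) :
    IsPrivateNeighbor G D x y ∨ IsPrivateNeighbor G D y x := by
  simp only [IsDominatingSet, not_forall, not_exists, not_and, deleteEdges_adj,
    Set.mem_singleton_iff, not_not] at hdel
  obtain ⟨w, hwD, hw⟩ := hdel
  obtain ⟨u, huD, huw⟩ := hD w hwD
  have hpriv : IsPrivateNeighbor G D u w := by
    refine ⟨hwD, Set.eq_singleton_iff_unique_mem.2 ⟨⟨huw.symm, huD⟩, fun d hd => ?_⟩⟩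
    exact Sym2.congr_left.1 ((hw d hd.2 hd.1.symm).trans (hw u huD huw).symm)
  rcases Sym2.eq_iff.1 (hw u huD huw) with ⟨rfl, rfl⟩ | ⟨rfl, rfl⟩
  · exact Or.inl hpriv
  · exact Or.inr hpriv

end IsDominatingSet

section CyclesThroughPrivateEdges

variable {C : G.Walk v v} {Z : G.Walk u u}

lemma mem_of_isCycle_of_notMem_support (hZ : Z.IsCycle)
    (hpriv : ∀ ⦃x y⦄, s(x, y) ∈ Z.edges → s(x, y) ∉ C.edges →
      IsPrivateNeighbor G D x y ∨ IsPrivateNeighbor G D y x)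
    (hxZ : x ∈ Z.support) (hxC : x ∉ C.support) : x ∈ D := by
  by_contra hxD
  obtain ⟨a, b, hab, hN⟩ := Set.ncard_eq_two.1 (hZ.ncard_neighborSet_toSubgraph_eq_two hxZ)
  have hprivx : ∀ y, Z.toSubgraph.Adj x y → IsPrivateNeighbor G D y x := fun y hy =>
    (hpriv (Walk.adj_toSubgraph_iff_mem_edges.1 hy)
      fun h => hxC (C.fst_mem_support_of_mem_edges h)).resolve_left fun h => hxD h.mem
  have ha : Z.toSubgraph.Adj x a := hN.ge (by simp)
  have hb : Z.toSubgraph.Adj x b := hN.ge (by simp)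
  exact hab ((hprivx b hb).eq_of_adj (hprivx a ha).mem ha.adj_sub.symm)

lemma support_subset_of_isCycle (hC : IsShortestOddClosed C) (hmiss : MissesFewest D C)
    (hZ : Z.IsCycle)
    (hpriv : ∀ ⦃x y⦄, s(x, y) ∈ Z.edges → s(x, y) ∉ C.edges →
      IsPrivateNeighbor G D x y ∨ IsPrivateNeighbor G D y x) :
    Z.support ⊆ C.support := by
  intro x hxZ
  by_contra hxC
  have hxD := mem_of_isCycle_of_notMem_support hZ hpriv hxZ hxC
  obtain ⟨a, b, hab, hN⟩ := Set.ncard_eq_two.1 (hZ.ncard_neighborSet_toSubgraph_eq_two hxZ)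
  have hprivx : ∀ y, Z.toSubgraph.Adj x y → IsPrivateNeighbor G D x y := fun y hy =>
    (hpriv (Walk.adj_toSubgraph_iff_mem_edges.1 hy)
      fun h => hxC (C.fst_mem_support_of_mem_edges h)).resolve_right fun h => h.1 hxD
  have hsupp : ∀ y, Z.toSubgraph.Adj x y → y ∈ C.support := fun y hy => by
    by_contra hyC
    exact (hprivx y hy).1
      (mem_of_isCycle_of_notMem_support hZ hpriv (Walk.mem_support_of_adj_toSubgraph hy.symm) hyC)
  have ha : Z.toSubgraph.Adj x a := hN.ge (by simp)
  have hb : Z.toSubgraph.Adj x b := hN.ge (by simp)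
  obtain ⟨z, hzC, hzD, hza⟩ := exists_mem_support_adj_of_common_neighbor hC hmiss hxD hxC
    (hsupp a ha) (hsupp b hb) hab ha.adj_sub hb.adj_sub
  exact hxC ((hprivx a ha).eq_of_adj hzD hza ▸ hzC)

end CyclesThroughPrivateEdges

lemma IsShortestOddClosed.isUniqueCycle {C : G.Walk v v} (hC : IsShortestOddClosed C)
    (hmiss : MissesFewest D C)
    (hpriv : ∀ ⦃x y⦄, G.Adj x y → s(x, y) ∉ C.edges → ¬ G.IsBridge s(x, y) →
      IsPrivateNeighbor G D x y ∨ IsPrivateNeighbor G D y x) : IsUniqueCycle C := by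
  refine ⟨hC.isCycle, fun u Z hZ => toSubgraph_eq_of_isCycle_of_le hZ hC.isCycle ?_⟩
  have hsupp : Z.support ⊆ C.support := support_subset_of_isCycle hC hmiss hZ fun x y hxy hxyC =>
    hpriv (Z.adj_of_mem_edges hxy) hxyC fun h => h.notMem_edges_of_isCycle hZ hxy
  refine ⟨fun x hx => ?_, fun x y hxy => ?_⟩
  · exact C.mem_verts_toSubgraph.2 (hsupp (Z.mem_verts_toSubgraph.1 hx))
  · exact Walk.adj_toSubgraph_iff_mem_edges.2 (hC.isChordless.mem_edges
      (hsupp (Walk.mem_support_of_adj_toSubgraph hxy))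
      (hsupp (Walk.mem_support_of_adj_toSubgraph hxy.symm)) hxy.adj_sub)

section Finite

variable [Fintype V]

theorem exists_connected_isDominatingSet_isUniqueCycle {C : G.Walk v v} (hG : G.Connected)
    (hC : IsShortestOddClosed C) (hmiss : MissesFewest D C) (hD : IsDominatingSet G D) :
    ∃ H ≤ G, H.Connected ∧ IsDominatingSet H D ∧
      ∃ C' : H.Walk v v, C'.length = C.length ∧ IsUniqueCycle C' := by
  obtain ⟨H, hHG, ⟨hconn, hCH, hHD⟩, hmin⟩ := exists_minimal_le_of_wellFoundedLT
    (fun H : SimpleGraph V => H.Connected ∧ (∀ e ∈ C.edges, e ∈ H.edgeSet) ∧ IsDominatingSet H D)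
    G ⟨hG, fun _ he => C.edges_subset_edgeSet he, hD⟩
  refine ⟨H, hHG, hconn, hHD, C.transfer H hCH, C.length_transfer hCH,
    (hC.transfer hHG hCH).isUniqueCycle (hmiss.transfer hHG hCH) fun x y hxy hxyC hbridge => ?_⟩
  rw [Walk.edges_transfer] at hxyC
  refine hHD.isPrivateNeighbor_or fun hdel => ?_
  have hle : H ≤ H.deleteEdges {s(x, y)} := by
    refine hmin ⟨hconn.connected_delete_edge_of_not_isBridge hbridge, fun e he => ?_, hdel⟩
      (H.deleteEdges_le _)
    rw [edgeSet_deleteEdges]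
    exact ⟨hCH e he, fun h => hxyC (h ▸ he)⟩
  simpa using hle hxy

lemma exists_isDominatingSet_card_eq (G : SimpleGraph V) :
    ∃ D : Finset V, IsDominatingSet G D ∧ D.card = dominationNumber G :=
  Nat.sInf_mem (s := {k | ∃ D : Finset V, IsDominatingSet G D ∧ D.card = k})
    ⟨_, Finset.univ, fun v hv => absurd (Finset.mem_univ v) hv, rfl⟩

lemma IsDominatingSet.dominationNumber_le (hD : IsDominatingSet G D) :
    dominationNumber G ≤ D.card :=
  Nat.sInf_le ⟨D, hD, rfl⟩

lemma dominationNumber_anti (hHG : H ≤ G) : dominationNumber G ≤ dominationNumber H := by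
  obtain ⟨D, hD, hcard⟩ := exists_isDominatingSet_card_eq H
  exact hcard ▸ (hD.mono hHG).dominationNumber_le

end Finite

end UniqueCycle

/-- Every finite connected nonbipartite graph `G` has a connected unicyclic spanning
subgraph `H` whose girth equals the odd girth of `G` and whose domination number
equals that of `G`. -/
theorem exists_unicyclic_spanning_subgraph_same_domination
    {V : Type*} [Fintype V] (G : SimpleGraph V)
    (hconn : G.Connected) (hnonbip : ¬ G.Colorable 2) :
    ∃ H : SimpleGraph V, H ≤ G ∧ H.Connected ∧
      H.edgeSet.ncard = Fintype.card V ∧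
      girthNat H = oddGirthNat G ∧
      dominationNumber H = dominationNumber G := by
  obtain ⟨D, hD, hcard⟩ := exists_isDominatingSet_card_eq G
  obtain ⟨v, C, hC, hmiss⟩ := exists_isShortestOddClosed_missesFewest hnonbip D
  obtain ⟨H, hHG, hH, hHD, C', hlen, hC'⟩ :=
    exists_connected_isDominatingSet_isUniqueCycle hconn hC hmiss hD
  refine ⟨H, hHG, hH, ?_, ?_, ?_⟩
  · rw [hC'.ncard_edgeSet hH, Nat.card_eq_fintype_card]
  · rw [hC'.girthNat_eq, hlen, hC.oddGirthNat_eq]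
  · exact le_antisymm (hcard ▸ hHD.dominationNumber_le) (dominationNumber_anti hHG)
end

section
/- Let γ ≥ 1 and n ≥ 4 be integers with n ∈ {3γ − 1, 3γ, 3γ + 1}. For every connected nonbipartite unicyclic graph G of order n with domination number γ, one has q_min(C*_{3,n−4}) ≤ q_min(G), where C*_{3,n−4} has order n, and equality holds if and only if G is isomorphic to C*_{3,n−4}. -/
open scoped Classical

/-- Edge relation for the graph `C*_{s,l}` on vertex indices `0, …, n-1`:
vertices `0, …, s-1` form a cycle `C_s` (with `0` playing the role of `v_1`);
vertices `0, s, s+1, …, s+l-1` form a path of length `l` hanging at `0`;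
and all remaining vertices `s+l, …, n-1` are pendant vertices attached to the
other end of the path (to `0` itself when `l = 0`). -/
def cstarRel (s l : ℕ) (a b : ℕ) : Prop :=
  (b = a + 1 ∧ a + 1 < s) ∨
  (a = 0 ∧ b = s - 1) ∨
  (1 ≤ l ∧ a = 0 ∧ b = s) ∨
  (b = a + 1 ∧ s ≤ a ∧ a + 1 < s + l) ∨
  (a = (if l = 0 then 0 else s + l - 1) ∧ s + l ≤ b)

/-- The graph `C*_{s,l}` of order `n`: a cycle `C_s` with a path of length `l`
attached, and `n - s - l` pendant edges attached at the far end of the path. -/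
def Cstar (n s l : ℕ) : SimpleGraph (Fin n) :=
  SimpleGraph.fromRel (fun i j => cstarRel s l i.val j.val)

/-- The signless Laplacian matrix `Q(G) = D(G) + A(G)` of a finite simple graph. -/
noncomputable def signlessLaplacian {V : Type*} [Fintype V] (G : SimpleGraph V) :
    Matrix V V ℝ :=
  fun i j => (if i = j then (G.degree i : ℝ) else 0) + (if G.Adj i j then 1 else 0)

/-- The least eigenvalue of the signless Laplacian of `G`. -/
noncomputable def qmin {V : Type*} [Fintype V] (G : SimpleGraph V) : ℝ :=
  sInf {μ : ℝ | ∃ x : V → ℝ, x ≠ 0 ∧ (signlessLaplacian G).mulVec x = μ • x}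

/-!
The quadratic form of `Q(G)` at `x` is `∑ (x u + x v) ^ 2` over the edges `uv`. A connected
nonbipartite graph has a non-bridge `ab` along which a `q_min`-eigenvector `x` does not change sign:
otherwise every edge joining vertices of equal sign would be a bridge, and swapping the signs on one
side of each such bridge would give a proper 2-colouring. The edge `ab` contributes
`(|x a| + |x b|) ^ 2`, and each edge of the connected graph `G - ab` at least `(|x u| - |x v|) ^ 2`.

Number the vertices `0, …, n - 1` by increasing modulus. Every cut of `G - ab` is crossed, and a
squared increment is at least the sum of the squares of its parts, so the edges of `G - ab` together
dominate the path `0, 1, …, n - 1`, or the path `2, …, n - 1` with `0` and `1` hanging at `2` in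
case `ab` joins `0` and `1`. In either case the form of `G` at `x` is at least that of the triangle
`0, 1, 2` with a path attached, at the vector with the same moduli, equal signs at `0` and `1` and
alternating signs along the path. In case of equality this vector is a `q_min`-eigenvector of the
latter graph, whose eigenvalue equations make the moduli increase strictly away from the triangle;
then no edge of `G` can skip a vertex.
-/

open Matrix Finset

lemma mem_spectrum_iff_exists_mulVec_eq_smul {ι K : Type*} [Fintype ι] [DecidableEq ι] [Field K]
    {A : Matrix ι ι K} {μ : K} : μ ∈ spectrum K A ↔ ∃ x : ι → K, x ≠ 0 ∧ A *ᵥ x = μ • x := by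
  rw [spectrum.mem_iff, isUnit_iff_isUnit_det, isUnit_iff_ne_zero, not_not,
    ← exists_mulVec_eq_zero_iff]
  simp only [Algebra.algebraMap_eq_smul_one, sub_mulVec, sub_eq_zero, smul_mulVec, one_mulVec,
    eq_comm]

section SignlessLaplacian

variable {V W : Type*} [Fintype V] [Fintype W]

lemma signlessLaplacian_eq_degMatrix_add_adjMatrix (G : SimpleGraph V) :
    signlessLaplacian G = G.degMatrix ℝ + G.adjMatrix ℝ := by
  ext v w
  simp [signlessLaplacian, SimpleGraph.degMatrix, Matrix.diagonal_apply]

lemma isHermitian_signlessLaplacian (G : SimpleGraph V) : (signlessLaplacian G).IsHermitian := by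
  rw [signlessLaplacian_eq_degMatrix_add_adjMatrix]
  exact (G.isHermitian_degMatrix ℝ).add (G.isHermitian_adjMatrix ℝ)

lemma signlessLaplacian_mulVec_apply (G : SimpleGraph V) (x : V → ℝ) (v : V) :
    (signlessLaplacian G *ᵥ x) v = ∑ w ∈ G.neighborFinset v, (x v + x w) := by
  rw [signlessLaplacian_eq_degMatrix_add_adjMatrix, add_mulVec, Pi.add_apply,
    G.degMatrix_mulVec_apply, G.adjMatrix_mulVec_apply, sum_add_distrib, sum_const,
    G.card_neighborFinset_eq_degree, nsmul_eq_mul]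

lemma signlessLaplacian_eq_submatrix_of_iso {G : SimpleGraph V} {H : SimpleGraph W} (φ : G ≃g H) :
    signlessLaplacian G = (signlessLaplacian H).submatrix φ φ := by
  ext v w
  simp [signlessLaplacian, φ.map_adj_iff, φ.degree_eq]

lemma signlessLaplacian_mulVec_comp_of_iso {G : SimpleGraph V} {H : SimpleGraph W} (φ : G ≃g H)
    (x : W → ℝ) : signlessLaplacian G *ᵥ (x ∘ φ) = (signlessLaplacian H *ᵥ x) ∘ φ := by
  have hx : (x ∘ φ) ∘ φ.toEquiv.symm = x := funext fun w ↦ congrArg x (φ.apply_symm_apply w)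
  rw [signlessLaplacian_eq_submatrix_of_iso φ]
  exact (submatrix_mulVec_equiv _ _ φ φ.toEquiv).trans (by rw [hx])

lemma qmin_eq_sInf_spectrum (G : SimpleGraph V) :
    qmin G = sInf (spectrum ℝ (signlessLaplacian G)) := by
  simp only [qmin, ← mem_spectrum_iff_exists_mulVec_eq_smul, Set.ofPred_mem_eq]

lemma qmin_eq_of_iso {G : SimpleGraph V} {H : SimpleGraph W} (φ : G ≃g H) : qmin G = qmin H := by
  rw [qmin_eq_sInf_spectrum, qmin_eq_sInf_spectrum, signlessLaplacian_eq_submatrix_of_iso φ]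
  congr 1
  exact AlgEquiv.spectrum_eq (reindexAlgEquiv ℝ ℝ φ.toEquiv.symm) (signlessLaplacian H)

lemma qmin_le_of_mem_spectrum {G : SimpleGraph V} {μ : ℝ}
    (hμ : μ ∈ spectrum ℝ (signlessLaplacian G)) : qmin G ≤ μ := by
  rw [qmin_eq_sInf_spectrum]
  exact csInf_le (signlessLaplacian G).finite_real_spectrum.bddBelow hμ

lemma exists_signlessLaplacian_mulVec_eq_qmin_smul [Nonempty V] (G : SimpleGraph V) :
    ∃ x : V → ℝ, x ≠ 0 ∧ signlessLaplacian G *ᵥ x = qmin G • x := by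
  rw [← mem_spectrum_iff_exists_mulVec_eq_smul, qmin_eq_sInf_spectrum]
  refine Set.Nonempty.csInf_mem ?_ (signlessLaplacian G).finite_real_spectrum
  rw [(isHermitian_signlessLaplacian G).spectrum_real_eq_range_eigenvalues]
  exact Set.range_nonempty _

open scoped MatrixOrder in
lemma posSemidef_signlessLaplacian_sub_qmin (G : SimpleGraph V) :
    (signlessLaplacian G - qmin G • (1 : Matrix V V ℝ)).PosSemidef := by
  rw [← Matrix.le_iff, ← Algebra.algebraMap_eq_smul_one]
  exact algebraMap_le_of_le_spectrum (fun _ ↦ qmin_le_of_mem_spectrum)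
    (isHermitian_signlessLaplacian G)

lemma qmin_mul_dotProduct_le (G : SimpleGraph V) (x : V → ℝ) :
    qmin G * (x ⬝ᵥ x) ≤ x ⬝ᵥ signlessLaplacian G *ᵥ x := by
  have h := (posSemidef_signlessLaplacian_sub_qmin G).dotProduct_mulVec_nonneg x
  simpa [sub_mulVec, smul_mulVec, dotProduct_sub] using h

lemma mulVec_eq_qmin_smul_of_dotProduct_eq {G : SimpleGraph V} {x : V → ℝ}
    (hx : x ⬝ᵥ signlessLaplacian G *ᵥ x = qmin G * (x ⬝ᵥ x)) :
    signlessLaplacian G *ᵥ x = qmin G • x := by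
  have h := ((posSemidef_signlessLaplacian_sub_qmin G).dotProduct_mulVec_zero_iff x).1 (by
    simp [sub_mulVec, smul_mulVec, dotProduct_sub, hx])
  simpa [sub_mulVec, smul_mulVec, sub_eq_zero] using h

end SignlessLaplacian

section BridgeColoring

variable {V α : Type*} {G : SimpleGraph V}

lemma nonempty_coloring_of_isBridge [Nontrivial α] {e : Sym2 V} (he : G.IsBridge e)
    (h : Nonempty ((G.deleteEdges {e}).Coloring α)) : Nonempty (G.Coloring α) := by
  induction e with | _ a b
  set K := G.deleteEdges {s(a, b)}
  obtain ⟨c⟩ := h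
  obtain ⟨k, hk⟩ := exists_ne (c b)
  let c' : V → α := fun v ↦ if K.Reachable a v then Equiv.swap (c a) k (c v) else c v
  have hab : c' a ≠ c' b := by
    simpa [c', show ¬ K.Reachable a b from SimpleGraph.isBridge_iff.1 he] using hk
  refine ⟨.mk c' fun {u v} huv ↦ ?_⟩
  by_cases hne : s(u, v) = s(a, b)
  · obtain ⟨rfl, rfl⟩ | ⟨rfl, rfl⟩ := Sym2.eq_iff.1 hne
    · exact hab
    · exact hab.symm
  · have hK : K.Adj u v := SimpleGraph.deleteEdges_adj.2 ⟨huv, hne⟩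
    have hreach : K.Reachable a u ↔ K.Reachable a v :=
      ⟨fun h ↦ h.trans hK.reachable, fun h ↦ h.trans hK.symm.reachable⟩
    by_cases hu : K.Reachable a v <;> simp [c', hreach, hu, c.valid hK]

lemma nonempty_coloring_of_forall_isBridge [Nontrivial α] {S : Set (Sym2 V)} (hS : S.Finite)
    (hbridge : ∀ e ∈ S, G.IsBridge e) (h : Nonempty ((G.deleteEdges S).Coloring α)) :
    Nonempty (G.Coloring α) := by
  induction S, hS using Set.Finite.induction_on with
  | empty => simpa using h
  | @insert e S _ _ ih =>
    rw [Set.forall_mem_insert] at hbridge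
    refine ih hbridge.2 (nonempty_coloring_of_isBridge
      (hbridge.1.anti (G.deleteEdges_le S)) ?_)
    rwa [SimpleGraph.deleteEdges_deleteEdges, Set.union_singleton]

lemma exists_adj_eq_not_isBridge [Finite V] [Nontrivial α] (hG : IsEmpty (G.Coloring α))
    (c : V → α) : ∃ a b, G.Adj a b ∧ c a = c b ∧ ¬ G.IsBridge s(a, b) := by
  by_contra! hbridge
  let S : Set (Sym2 V) := {e | e ∈ G.edgeSet ∧ (e.map c).IsDiag}
  refine not_nonempty_iff.2 hG (nonempty_coloring_of_forall_isBridge S.toFinite ?_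
    ⟨.mk c fun {u v} huv ↦ ?_⟩)
  · rintro ⟨a, b⟩ ⟨hab, hc⟩
    exact hbridge a b hab hc
  · simp only [S, SimpleGraph.deleteEdges_adj, Set.mem_ofPred_eq, SimpleGraph.mem_edgeSet,
      Sym2.map_mk, Sym2.mk_isDiag_iff, not_and] at huv
    exact huv.2 huv.1

end BridgeColoring

section IncreasingEdges

variable {V : Type*} [Fintype V] [LinearOrder V]

/-- The edges of a graph on a linearly ordered vertex set, each listed once, as the pair of its
endpoints in increasing order. -/
noncomputable def increasingEdges (G : SimpleGraph V) : Finset (V × V) :=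
  {p | p.1 < p.2 ∧ G.Adj p.1 p.2}

lemma mem_increasingEdges {G : SimpleGraph V} {p : V × V} :
    p ∈ increasingEdges G ↔ p.1 < p.2 ∧ G.Adj p.1 p.2 := by
  simp [increasingEdges]

lemma mk_mem_increasingEdges_or_swap {G : SimpleGraph V} {u v : V} (h : G.Adj u v) :
    (u, v) ∈ increasingEdges G ∨ (v, u) ∈ increasingEdges G := by
  simpa [mem_increasingEdges, h, h.symm] using lt_or_gt_of_ne h.ne

lemma increasingEdges_injective : Function.Injective (increasingEdges (V := V)) := by
  intro G H h
  have hmono (G H : SimpleGraph V) (h : increasingEdges G = increasingEdges H) : G ≤ H := by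
    intro u v huv
    obtain huv | huv := mk_mem_increasingEdges_or_swap huv
    · exact (mem_increasingEdges.1 (h ▸ huv)).2
    · exact (mem_increasingEdges.1 (h ▸ huv)).2.symm
  exact le_antisymm (hmono G H h) (hmono H G h.symm)

lemma increasingEdges_eq_insert {G : SimpleGraph V} {p : V × V} (hp : p ∈ increasingEdges G) :
    increasingEdges G = insert p (increasingEdges (G.deleteEdges {s(p.1, p.2)})) := by
  obtain ⟨a, b⟩ := p
  ext ⟨u, v⟩
  simp only [mem_increasingEdges, mem_insert, SimpleGraph.deleteEdges_adj, Set.mem_singleton_iff,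
    Sym2.eq_iff, Prod.mk.injEq] at hp ⊢
  grind

lemma notMem_increasingEdges_deleteEdges (G : SimpleGraph V) (p : V × V) :
    p ∉ increasingEdges (G.deleteEdges {s(p.1, p.2)}) := by
  simp [mem_increasingEdges]

lemma sum_neighborFinset_eq_sum_increasingEdges (G : SimpleGraph V) (f : V → V → ℝ) :
    ∑ u, ∑ v ∈ G.neighborFinset u, f u v =
      ∑ p ∈ increasingEdges G, (f p.1 p.2 + f p.2 p.1) := by
  have hdecreasing : ∑ p : V × V with p.2 < p.1 ∧ G.Adj p.1 p.2, f p.1 p.2 =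
      ∑ p ∈ increasingEdges G, f p.2 p.1 :=
    sum_equiv (Equiv.prodComm V V) (by simp [mem_increasingEdges, G.adj_comm]) (by simp)
  rw [sum_add_distrib, ← hdecreasing, increasingEdges, ← sum_union]
  · refine (sum_finset_product' _ _ _ fun p ↦ ?_).symm
    have hne : G.Adj p.1 p.2 → p.1 ≠ p.2 := SimpleGraph.Adj.ne
    simp only [mem_union, mem_filter_univ, mem_univ, SimpleGraph.mem_neighborFinset]
    grind
  · exact disjoint_filter.2 fun p _ hp hp' ↦ hp.1.asymm hp'.1

lemma dotProduct_signlessLaplacian_mulVec (G : SimpleGraph V) (x : V → ℝ) :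
    x ⬝ᵥ signlessLaplacian G *ᵥ x = ∑ p ∈ increasingEdges G, (x p.1 + x p.2) ^ 2 := by
  simp only [dotProduct, signlessLaplacian_mulVec_apply, mul_sum]
  rw [sum_neighborFinset_eq_sum_increasingEdges]
  exact sum_congr rfl fun p _ ↦ by ring

end IncreasingEdges

lemma sum_le_sum_sum_of_subset_biUnion {ι κ : Type*} [DecidableEq κ] {s : Finset κ}
    {P : Finset ι} {t : ι → Finset κ} {f : κ → ℝ} (hf : ∀ k, 0 ≤ f k) (hs : s ⊆ P.biUnion t) :
    ∑ k ∈ s, f k ≤ ∑ p ∈ P, ∑ k ∈ t p, f k := by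
  refine (sum_le_sum_of_subset_of_nonneg hs fun k _ _ ↦ hf k).trans ?_
  clear hs
  induction P using Finset.induction_on with
  | empty => simp
  | insert p P hp ih =>
    rw [biUnion_insert, sum_insert hp]
    have hunion := sum_union_inter (s₁ := t p) (s₂ := P.biUnion t) (f := f)
    linarith [sum_nonneg fun k (_ : k ∈ t p ∩ P.biUnion t) ↦ hf k]

section Broom

/-- The parent of `l` in the broom with brush `{0, …, m - 1}` and handle `m, m + 1, …`: every
vertex of the brush hangs at `m`, and every vertex of the handle precedes its parent. -/
def broomParent (m l : ℕ) : ℕ := max (l + 1) m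

/-- The path from `i` to `j` in the broom with brush `{0, …, m - 1}`, where `j` is an ancestor of
`i`. Each edge of the path is represented by its endpoint farther from `j`. -/
def broomPath (m i j : ℕ) : Finset ℕ := insert i (Ico (broomParent m i) j)

variable {m : ℕ} {g : ℕ → ℝ}

lemma broomParent_of_le {l : ℕ} (h : m ≤ l + 1) : broomParent m l = l + 1 := max_eq_left h

lemma sum_sq_broomPath_le (hg : Monotone g) {i j : ℕ} (hij : broomParent m i ≤ j) :
    ∑ l ∈ broomPath m i j, (g (broomParent m l) - g l) ^ 2 +
      2 * ((g (broomParent m i) - g i) * (g j - g (broomParent m i))) ≤ (g j - g i) ^ 2 := by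
  have hi : i < broomParent m i := lt_max_of_lt_left i.lt_succ_self
  have hparent : ∀ l ∈ Ico (broomParent m i) j, broomParent m l = l + 1 := fun l hl ↦
    broomParent_of_le (((le_max_right (i + 1) m).trans (mem_Ico.1 hl).1).trans l.le_succ)
  have hhandle : ∑ l ∈ Ico (broomParent m i) j, (g (broomParent m l) - g l) ^ 2 ≤
      (g j - g (broomParent m i)) ^ 2 := by
    rw [← sum_Ico_sub g hij, sum_congr rfl fun l hl ↦ by rw [hparent l hl]]
    exact sum_sq_le_sq_sum_of_nonneg fun l _ ↦ sub_nonneg.2 (hg l.le_succ)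
  rw [broomPath, sum_insert (by simp [hi])]
  linarith

variable {n : ℕ} {K : SimpleGraph (Fin n)}

lemma broomParent_le_of_mem_increasingEdges (hm : ∀ p ∈ increasingEdges K, m ≤ p.2.val)
    {p : Fin n × Fin n} (hp : p ∈ increasingEdges K) : broomParent m p.1 ≤ p.2 :=
  max_le (mem_increasingEdges.1 hp).1 (hm p hp)

lemma range_subset_biUnion_broomPath (hK : K.Preconnected)
    (hm : ∀ p ∈ increasingEdges K, m ≤ p.2.val) :
    range (n - 1) ⊆ (increasingEdges K).biUnion fun p ↦ broomPath m p.1 p.2 := by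
  intro l hl
  have hln : l + 1 < n := by grind
  suffices ∃ p ∈ increasingEdges K, l ∈ broomPath m p.1 p.2 by simpa only [mem_biUnion]
  let v : Fin n := ⟨l, by omega⟩
  obtain hlm | hlm := lt_or_ge l m
  · have : Nontrivial (Fin n) := Fin.nontrivial_iff_two_le.2 (by omega)
    obtain ⟨w, hvw⟩ := hK.exists_adj_of_nontrivial v
    obtain hp | hp := mk_mem_increasingEdges_or_swap hvw
    · exact ⟨_, hp, mem_insert_self _ _⟩
    · exact absurd (hm _ hp) hlm.not_ge
  · obtain ⟨walk⟩ := hK v ⟨l + 1, hln⟩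
    obtain ⟨d, -, hd₁, hd₂⟩ := walk.exists_boundary_dart (Set.Iic v)
      (Set.mem_Iic.2 le_rfl) (by simp [v])
    rw [Set.mem_Iic] at hd₁ hd₂
    refine ⟨d.toProd, mem_increasingEdges.2 ⟨hd₁.trans_lt (not_le.1 hd₂), d.adj⟩, ?_⟩
    simp only [v, Fin.le_def] at hd₁ hd₂
    simp only [broomPath, broomParent, mem_insert, mem_Ico]
    omega

lemma sum_sq_broomPath_le_of_mem_increasingEdges (hm : ∀ p ∈ increasingEdges K, m ≤ p.2.val)
    (hg : Monotone g) {p : Fin n × Fin n} (hp : p ∈ increasingEdges K) :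
    ∑ l ∈ broomPath m p.1 p.2, (g (broomParent m l) - g l) ^ 2 ≤ (g p.2 - g p.1) ^ 2 := by
  have hj := broomParent_le_of_mem_increasingEdges hm hp
  have hi : g p.1 ≤ g (broomParent m p.1) := hg (le_max_of_le_left p.1.val.le_succ)
  linarith [sum_sq_broomPath_le hg hj, mul_nonneg (sub_nonneg.2 hi) (sub_nonneg.2 (hg hj))]

lemma sum_sq_broom_le_sum_sum_broomPath (hK : K.Preconnected)
    (hm : ∀ p ∈ increasingEdges K, m ≤ p.2.val) :
    ∑ l ∈ range (n - 1), (g (broomParent m l) - g l) ^ 2 ≤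
      ∑ p ∈ increasingEdges K, ∑ l ∈ broomPath m p.1 p.2, (g (broomParent m l) - g l) ^ 2 :=
  sum_le_sum_sum_of_subset_biUnion (fun _ ↦ sq_nonneg _) (range_subset_biUnion_broomPath hK hm)

lemma sum_sq_broom_le (hK : K.Preconnected) (hm : ∀ p ∈ increasingEdges K, m ≤ p.2.val)
    (hg : Monotone g) : ∑ l ∈ range (n - 1), (g (broomParent m l) - g l) ^ 2 ≤
      ∑ p ∈ increasingEdges K, (g p.2 - g p.1) ^ 2 :=
  (sum_sq_broom_le_sum_sum_broomPath hK hm).trans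
    (sum_le_sum fun _ ↦ sum_sq_broomPath_le_of_mem_increasingEdges hm hg)

lemma eq_broomParent_of_sum_sq_le (hK : K.Preconnected)
    (hm : ∀ p ∈ increasingEdges K, m ≤ p.2.val) (hg : Monotone g)
    (hstrict : ∀ l, l + 1 < n → g l < g (broomParent m l))
    (hle : ∑ p ∈ increasingEdges K, (g p.2 - g p.1) ^ 2 ≤
      ∑ l ∈ range (n - 1), (g (broomParent m l) - g l) ^ 2)
    {p : Fin n × Fin n} (hp : p ∈ increasingEdges K) : p.2.val = broomParent m p.1 := by
  by_contra hne
  have hpath := (sum_eq_sum_iff_of_le fun _ ↦ sum_sq_broomPath_le_of_mem_increasingEdges hm hg).1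
    ((sum_le_sum fun _ ↦ sum_sq_broomPath_le_of_mem_increasingEdges hm hg).antisymm
      (hle.trans (sum_sq_broom_le_sum_sum_broomPath hK hm))) p hp
  have hj := broomParent_le_of_mem_increasingEdges hm hp
  have hlt : broomParent m p.1 < p.2 := lt_of_le_of_ne' hj hne
  have hfirst := hstrict p.1 (Nat.lt_of_le_of_lt (mem_increasingEdges.1 hp).1 p.2.isLt)
  have hlast : g (broomParent m p.1) < g p.2 :=
    (hstrict _ (Nat.lt_of_le_of_lt hlt p.2.isLt)).trans_le (hg (max_le hlt (hm p hp)))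
  linarith [sum_sq_broomPath_le hg hj, mul_pos (sub_pos.2 hfirst) (sub_pos.2 hlast)]

lemma mem_increasingEdges_iff_of_sum_sq_le (hK : K.Preconnected)
    (hm : ∀ p ∈ increasingEdges K, m ≤ p.2.val) (hg : Monotone g)
    (hstrict : ∀ l, l + 1 < n → g l < g (broomParent m l))
    (hle : ∑ p ∈ increasingEdges K, (g p.2 - g p.1) ^ 2 ≤
      ∑ l ∈ range (n - 1), (g (broomParent m l) - g l) ^ 2)
    {p : Fin n × Fin n} : p ∈ increasingEdges K ↔ p.2.val = broomParent m p.1 := by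
  refine ⟨eq_broomParent_of_sum_sq_le hK hm hg hstrict hle, fun hp ↦ ?_⟩
  have hlt : p.1.val + 1 ≤ p.2 := hp ▸ le_max_left _ _
  obtain ⟨e, he, hl⟩ := mem_biUnion.1 <| range_subset_biUnion_broomPath hK hm <|
    mem_range.2 (show p.1.val < n - 1 by omega)
  have heq := eq_broomParent_of_sum_sq_le hK hm hg hstrict hle he
  rw [broomPath, heq, Ico_self, insert_empty, mem_singleton] at hl
  have hep : e = p := Prod.ext (Fin.ext hl.symm) (Fin.ext (by rw [heq, ← hl, hp]))
  rwa [← hep]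

end Broom

section SameSignEdge

variable {V : Type*} [Fintype V] [LinearOrder V] {G : SimpleGraph V}

lemma exists_nonneg_iff_nonneg_connected_deleteEdges (hG : G.Connected) (hbip : ¬ G.Colorable 2)
    (x : V → ℝ) : ∃ p ∈ increasingEdges G,
      (G.deleteEdges {s(p.1, p.2)}).Connected ∧ (0 ≤ x p.1 ↔ 0 ≤ x p.2) := by
  have hcol : IsEmpty (G.Coloring Prop) :=
    not_nonempty_iff.1 fun ⟨c⟩ ↦ hbip (by simpa using c.colorable)
  obtain ⟨a, b, hab, hsign, hbridge⟩ := exists_adj_eq_not_isBridge hcol fun v ↦ 0 ≤ x v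
  have hdel := hG.connected_delete_edge_of_not_isBridge hbridge
  obtain h | h := mk_mem_increasingEdges_or_swap hab
  · exact ⟨_, h, hdel, hsign.to_iff⟩
  · exact ⟨_, h, Sym2.eq_swap ▸ hdel, hsign.to_iff.symm⟩

lemma sq_abs_add_abs_add_sum_le {x : V → ℝ} {p : V × V} (hp : p ∈ increasingEdges G)
    (hsign : 0 ≤ x p.1 ↔ 0 ≤ x p.2) :
    (|x p.1| + |x p.2|) ^ 2 +
        ∑ e ∈ increasingEdges (G.deleteEdges {s(p.1, p.2)}), (|x e.2| - |x e.1|) ^ 2 ≤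
      x ⬝ᵥ signlessLaplacian G *ᵥ x := by
  rw [dotProduct_signlessLaplacian_mulVec, increasingEdges_eq_insert hp,
    sum_insert (notMem_increasingEdges_deleteEdges G p)]
  refine add_le_add (le_of_eq ?_) (sum_le_sum fun e _ ↦ sq_le_sq.2 ?_)
  · have hadd : |x p.1 + x p.2| = |x p.1| + |x p.2| := by
      rw [abs_add_eq_add_abs_iff]
      grind
    rw [← hadd, sq_abs]
  · simpa [add_comm] using abs_abs_sub_abs_le_abs_sub (x e.2) (-x e.1)

end SameSignEdge

section Lollipop

/-- The triangle `0, 1, 2` with the path `2, 3, …, n - 1` attached. This is `Cstar n 3 (n - 4)`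
for `4 ≤ n`, numbered so that the moduli of an eigenvector for `qmin` increase. -/
def lollipop (n : ℕ) : SimpleGraph (Fin n) :=
  SimpleGraph.fromRel fun i j ↦ (i.val = 0 ∧ j.val = 1) ∨ j.val = broomParent 2 i.val

/-- The value of the quadratic form of the signless Laplacian of `lollipop n` at a vector with
moduli `g`, with equal signs at `0` and `1` and opposite signs along every other edge. -/
def lollipopForm (n : ℕ) (g : ℕ → ℝ) : ℝ :=
  (g 0 + g 1) ^ 2 + ∑ l ∈ range (n - 1), (g (broomParent 2 l) - g l) ^ 2

variable {n : ℕ} {g : ℕ → ℝ}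

lemma mem_increasingEdges_lollipop {p : Fin n × Fin n} : p ∈ increasingEdges (lollipop n) ↔
    (p.1.val = 0 ∧ p.2.val = 1) ∨ p.2.val = broomParent 2 p.1 := by
  simp only [mem_increasingEdges, lollipop, SimpleGraph.fromRel_adj, broomParent, Fin.lt_def,
    ne_eq, Fin.ext_iff]
  omega

lemma lollipopForm_add_eq (hn : 3 ≤ n) (g : ℕ → ℝ) :
    lollipopForm n g + 4 * (g 0 * (g 2 - g 1)) =
      (g 0 + g 2) ^ 2 + ∑ l ∈ range (n - 1), (g (broomParent 0 l) - g l) ^ 2 := by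
  obtain ⟨k, rfl⟩ := Nat.exists_eq_add_of_le' hn
  have hparent (l : ℕ) : broomParent 2 (l + 1) = l + 1 + 1 := broomParent_of_le (by omega)
  simp only [lollipopForm, show k + 3 - 1 = k + 1 + 1 from rfl, sum_range_succ', hparent,
    broomParent_of_le zero_le, show broomParent 2 0 = 2 from rfl]
  ring

variable {H : SimpleGraph (Fin n)} {p : Fin n × Fin n}

lemma lollipopForm_add_le_of_two_le (hK : (H.deleteEdges {s(p.1, p.2)}).Connected)
    (h2 : 2 ≤ p.2.val) (hg : Monotone g) (hg0 : 0 ≤ g 0) :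
    lollipopForm n g + 4 * (g 0 * (g 2 - g 1)) ≤ (g p.1 + g p.2) ^ 2 +
      ∑ e ∈ increasingEdges (H.deleteEdges {s(p.1, p.2)}), (g e.2 - g e.1) ^ 2 := by
  rw [lollipopForm_add_eq (h2.trans_lt p.2.isLt)]
  have hfirst : g 0 ≤ g p.1 := hg zero_le
  have hsecond : g 2 ≤ g p.2 := hg h2
  have h02 : g 0 ≤ g 2 := hg zero_le
  exact add_le_add (pow_le_pow_left₀ (by linarith) (add_le_add hfirst hsecond) 2)
    (sum_sq_broom_le hK.preconnected (fun _ _ ↦ zero_le) hg)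

lemma two_le_of_mem_increasingEdges_deleteEdges (hp : p ∈ increasingEdges H) (h2 : p.2.val < 2)
    {e : Fin n × Fin n} (he : e ∈ increasingEdges (H.deleteEdges {s(p.1, p.2)})) :
    2 ≤ e.2.val := by
  have hp := (mem_increasingEdges.1 hp).1
  have he' := (mem_increasingEdges.1 he).1
  by_contra hlt
  have hep : e = p := by
    ext <;> omega
  exact notMem_increasingEdges_deleteEdges H p (hep ▸ he)

lemma lollipopForm_eq_of_lt_two (hp : p ∈ increasingEdges H) (h2 : p.2.val < 2) :
    lollipopForm n g = (g p.1 + g p.2) ^ 2 +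
      ∑ l ∈ range (n - 1), (g (broomParent 2 l) - g l) ^ 2 := by
  have hlt : p.1.val < p.2.val := (mem_increasingEdges.1 hp).1
  rw [lollipopForm, show p.1.val = 0 by omega, show p.2.val = 1 by omega]

lemma eq_lollipop_of_sum_sq_le (hp : p ∈ increasingEdges H) (h2 : p.2.val < 2)
    (hK : (H.deleteEdges {s(p.1, p.2)}).Connected) (hg : Monotone g)
    (hstrict : ∀ l, l + 1 < n → g l < g (broomParent 2 l))
    (hle : ∑ e ∈ increasingEdges (H.deleteEdges {s(p.1, p.2)}), (g e.2 - g e.1) ^ 2 ≤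
      ∑ l ∈ range (n - 1), (g (broomParent 2 l) - g l) ^ 2) : H = lollipop n := by
  have hlt : p.1.val < p.2.val := (mem_increasingEdges.1 hp).1
  refine increasingEdges_injective (Finset.ext fun e ↦ ?_)
  rw [increasingEdges_eq_insert hp, mem_insert, mem_increasingEdges_lollipop,
    mem_increasingEdges_iff_of_sum_sq_le hK.preconnected
      (fun _ ↦ two_le_of_mem_increasingEdges_deleteEdges hp h2) hg hstrict hle,
    Prod.ext_iff, Fin.ext_iff, Fin.ext_iff]
  omega

variable {x : Fin n → ℝ}

lemma lollipopForm_le_dotProduct (hH : H.Connected) (hbip : ¬ H.Colorable 2) (hg : Monotone g)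
    (hx : ∀ i : Fin n, |x i| = g i) : lollipopForm n g ≤ x ⬝ᵥ signlessLaplacian H *ᵥ x := by
  obtain ⟨p, hp, hK, hsign⟩ := exists_nonneg_iff_nonneg_connected_deleteEdges hH hbip x
  refine le_trans ?_ (sq_abs_add_abs_add_sum_le hp hsign)
  simp only [hx]
  obtain h2 | h2 := lt_or_ge p.2.val 2
  · rw [lollipopForm_eq_of_lt_two hp h2]
    gcongr
    exact sum_sq_broom_le hK.preconnected
      (fun _ ↦ two_le_of_mem_increasingEdges_deleteEdges hp h2) hg
  · have hg0 : 0 ≤ g 0 := hx ⟨0, p.1.pos⟩ ▸ abs_nonneg _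
    have h12 : g 1 ≤ g 2 := hg one_le_two
    linarith [lollipopForm_add_le_of_two_le hK h2 hg hg0, mul_nonneg hg0 (sub_nonneg.2 h12)]

lemma eq_lollipop_of_dotProduct_le (hH : H.Connected) (hbip : ¬ H.Colorable 2)
    (hg : Monotone g) (hx : ∀ i : Fin n, |x i| = g i) (hg0 : 0 < g 0)
    (hstrict : ∀ l, l + 1 < n → g l < g (broomParent 2 l))
    (hle : x ⬝ᵥ signlessLaplacian H *ᵥ x ≤ lollipopForm n g) : H = lollipop n := by
  obtain ⟨p, hp, hK, hsign⟩ := exists_nonneg_iff_nonneg_connected_deleteEdges hH hbip x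
  have hle := (sq_abs_add_abs_add_sum_le hp hsign).trans hle
  simp only [hx] at hle
  obtain h2 | h2 := lt_or_ge p.2.val 2
  · rw [lollipopForm_eq_of_lt_two hp h2] at hle
    exact eq_lollipop_of_sum_sq_le hp h2 hK hg hstrict (le_of_add_le_add_left hle)
  · have h12 : g 1 < g 2 := hstrict 1 (h2.trans_lt p.2.isLt)
    linarith [lollipopForm_add_le_of_two_le hK h2 hg hg0.le, mul_pos hg0 (sub_pos.2 h12)]

end Lollipop

section LollipopEigenvector

/-- `g` lists the moduli of an eigenvector of the signless Laplacian of `lollipop n` with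
eigenvalue `q`, under the sign pattern of `lollipopForm`, and these moduli increase. The convention
`g n = g (n - 1)` lets the last vertex satisfy the same equation as the interior of the path. -/
structure IsLollipopProfile (n : ℕ) (q : ℝ) (g : ℕ → ℝ) : Prop where
  monotone : Monotone g
  nonneg : 0 ≤ g 0
  pos_last : 0 < g (n - 1)
  eq_last : g n = g (n - 1)
  eq_zero : (g 0 + g 1) - (g 2 - g 0) = q * g 0
  eq_one : (g 0 + g 1) - (g 2 - g 1) = q * g 1
  eq_two : (g 2 - g 0) + (g 2 - g 1) - (g 3 - g 2) = q * g 2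
  eq_path {k : ℕ} (hk : 2 ≤ k) (hkn : k + 1 < n) :
    (g (k + 1) - g k) - (g (k + 2) - g (k + 1)) = q * g (k + 1)

namespace IsLollipopProfile

variable {n k : ℕ} {q : ℝ} {g : ℕ → ℝ}

lemma sum_Ico_pos (h : IsLollipopProfile n q g) (hkn : k < n) : 0 < ∑ j ∈ Ico k n, g j :=
  sum_pos' (fun _ _ ↦ h.nonneg.trans (h.monotone zero_le)) ⟨n - 1, by grind, h.pos_last⟩

lemma sub_eq_mul_sum (h : IsLollipopProfile n q g) (hk : 2 ≤ k) (hkn : k + 1 ≤ n) :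
    g (k + 1) - g k = q * ∑ j ∈ Ico (k + 1) n, g j := by
  have htelescope := sum_Ico_sub (fun j ↦ g (j - 1) - g j) hkn
  have heq : ∀ j ∈ Ico (k + 1) n, g (j + 1 - 1) - g (j + 1) - (g (j - 1) - g j) = q * g j := by
    intro j hj
    obtain ⟨i, rfl⟩ : ∃ i, j = i + 1 := ⟨j - 1, by grind⟩
    rw [← h.eq_path (by grind) (mem_Ico.1 hj).2, Nat.add_sub_cancel, Nat.add_sub_cancel]
    ring
  rw [mul_sum, ← sum_congr rfl heq, htelescope, h.eq_last, Nat.add_sub_cancel]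
  ring

lemma sub_add_sub_eq_mul_sum (h : IsLollipopProfile n q g) (hn : 3 ≤ n) :
    (g 2 - g 0) + (g 2 - g 1) = q * ∑ j ∈ Ico 2 n, g j := by
  rw [sum_eq_sum_Ico_succ_bot (by omega), mul_add, ← h.sub_eq_mul_sum le_rfl hn, ← h.eq_two]
  ring

lemma ne_zero (h : IsLollipopProfile n q g) (hn : 3 ≤ n) : q ≠ 0 := by
  rintro rfl
  have htriangle := h.sub_add_sub_eq_mul_sum hn
  have h01 := h.monotone zero_le_one
  have h12 := h.monotone one_le_two
  have hpath : ∀ k, 2 ≤ k → k < n → g k = 0 := by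
    refine fun k hk ↦ Nat.le_induction (fun _ ↦ ?_) (fun k hk ih hkn ↦ ?_) k hk
    · linarith [h.eq_zero, h.nonneg]
    · linarith [h.sub_eq_mul_sum hk hkn.le, ih (by omega)]
  exact h.pos_last.ne' (hpath (n - 1) (by omega) (by omega))

lemma pos (h : IsLollipopProfile n q g) (hn : 3 ≤ n) : 0 < q := by
  refine lt_of_le_of_ne' (nonneg_of_mul_nonneg_left ?_ (h.sum_Ico_pos hn)) (h.ne_zero hn)
  rw [← h.sub_add_sub_eq_mul_sum hn]
  exact add_nonneg (sub_nonneg.2 (h.monotone zero_le)) (sub_nonneg.2 (h.monotone one_le_two))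

lemma two_pos (h : IsLollipopProfile n q g) (hn : 3 ≤ n) : 0 < g 2 := by
  linarith [h.sub_add_sub_eq_mul_sum hn, mul_pos (h.pos hn) (h.sum_Ico_pos hn), h.nonneg,
    h.monotone zero_le_one]

lemma lt_one (h : IsLollipopProfile n q g) (hn : 4 ≤ n) : q < 1 := by
  obtain ⟨k, rfl⟩ := Nat.exists_eq_add_of_le' hn
  have hlast := h.sub_eq_mul_sum (k := k + 2) (by omega) (by omega)
  rw [Nat.Ico_succ_singleton, sum_singleton] at hlast
  have hpos : 0 < (1 - q) * g (k + 3) := by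
    linarith [h.two_pos (by omega), h.monotone (show 2 ≤ k + 2 by omega)]
  exact sub_pos.1 (pos_of_mul_pos_left hpos h.pos_last.le)

lemma zero_eq_one (h : IsLollipopProfile n q g) (hn : 4 ≤ n) : g 0 = g 1 := by
  refine sub_eq_zero.1 ((mul_eq_zero.1 ?_).resolve_left (sub_ne_zero.2 (h.lt_one hn).ne'))
  linarith [h.eq_zero, h.eq_one]

lemma zero_pos (h : IsLollipopProfile n q g) (hn : 4 ≤ n) : 0 < g 0 := by
  refine lt_of_le_of_ne' h.nonneg fun h0 ↦ (h.two_pos (by omega)).ne' ?_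
  have hzero := h.eq_zero
  rw [← h.zero_eq_one hn, h0] at hzero
  linarith

lemma zero_lt_two (h : IsLollipopProfile n q g) (hn : 4 ≤ n) : g 0 < g 2 := by
  have hn₃ : 3 ≤ n := by omega
  linarith [h.sub_add_sub_eq_mul_sum hn₃, mul_pos (h.pos hn₃) (h.sum_Ico_pos hn₃),
    h.zero_eq_one hn]

lemma lt_broomParent (h : IsLollipopProfile n q g) (hn : 4 ≤ n) (hkn : k + 1 < n) :
    g k < g (broomParent 2 k) := by
  obtain rfl | rfl | hk : k = 0 ∨ k = 1 ∨ 2 ≤ k := by omega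
  · exact h.zero_lt_two hn
  · exact h.zero_eq_one hn ▸ h.zero_lt_two hn
  · rw [broomParent_of_le (by omega), ← sub_pos, h.sub_eq_mul_sum hk hkn.le]
    exact mul_pos (h.pos (by omega)) (h.sum_Ico_pos hkn)

end IsLollipopProfile

variable {n : ℕ}

/-- The sign pattern of `lollipopForm`: equal signs at `0` and `1`, then alternating signs. -/
def lollipopSign (k : ℕ) : ℝ := (-1) ^ max k 1

lemma lollipopSign_mul_self (k : ℕ) : lollipopSign k * lollipopSign k = 1 := by
  rw [lollipopSign, ← pow_add, (Even.add_self _).neg_one_pow]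

lemma lollipopSign_broomParent (k : ℕ) : lollipopSign (broomParent 2 k) = -lollipopSign k := by
  rw [lollipopSign, lollipopSign, broomParent, show max (max (k + 1) 2) 1 = max k 1 + 1 by omega,
    pow_succ, mul_neg_one]

/-- The vector on the vertices of `lollipop n` with moduli `g` and the signs `lollipopSign`. -/
def lollipopVector (n : ℕ) (g : ℕ → ℝ) (i : Fin n) : ℝ := lollipopSign i * g i

lemma sum_increasingEdges_lollipop (hn : 3 ≤ n) (f : ℕ → ℕ → ℝ) :
    ∑ p ∈ increasingEdges (lollipop n), f p.1 p.2 =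
      f 0 1 + ∑ l ∈ range (n - 1), f l (broomParent 2 l) := by
  have hedges : increasingEdges (lollipop n) = insert (⟨0, by omega⟩, ⟨1, by omega⟩)
      ({p | p.2.val = broomParent 2 p.1} : Finset (Fin n × Fin n)) := by
    ext p
    simp only [mem_increasingEdges_lollipop, mem_insert, mem_filter_univ, Prod.ext_iff,
      Fin.ext_iff]
  rw [hedges, sum_insert (by rw [mem_filter_univ]; simp [broomParent])]
  congr 1
  have hparent {l : ℕ} (hl : l ∈ range (n - 1)) : broomParent 2 l < n := by
    grind [broomParent]
  refine sum_bij' (fun p _ ↦ p.1.val)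
    (fun l hl ↦ (⟨l, by grind⟩, ⟨broomParent 2 l, hparent hl⟩)) ?_ ?_ ?_ ?_ ?_
  all_goals
    simp only [mem_filter_univ]
    grind [broomParent]

lemma dotProduct_signlessLaplacian_mulVec_lollipopVector (hn : 3 ≤ n) (g : ℕ → ℝ) :
    lollipopVector n g ⬝ᵥ signlessLaplacian (lollipop n) *ᵥ lollipopVector n g =
      lollipopForm n g := by
  simp only [dotProduct_signlessLaplacian_mulVec, lollipopVector]
  rw [sum_increasingEdges_lollipop hn
    fun k l ↦ (lollipopSign k * g k + lollipopSign l * g l) ^ 2, lollipopForm]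
  simp only [lollipopSign_broomParent]
  congr 1
  · simp only [lollipopSign, max_eq_right zero_le_one, max_self, pow_one]
    ring
  · refine sum_congr rfl fun l _ ↦ ?_
    linear_combination (g l - g (broomParent 2 l)) ^ 2 * lollipopSign_mul_self l

lemma sum_add_eq_of_signlessLaplacian_mulVec_eq_smul {G : SimpleGraph (Fin n)} {q : ℝ} {y : ℕ → ℝ}
    (hq : signlessLaplacian G *ᵥ (fun i ↦ y i) = q • fun i : Fin n ↦ y i) {k : ℕ} (hkn : k < n)
    {N : Finset ℕ} (hNn : N ⊆ range n) (hN : ∀ l : Fin n, G.Adj ⟨k, hkn⟩ l ↔ l.val ∈ N) :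
    ∑ l ∈ N, (y k + y l) = q * y k := by
  have hmap : (G.neighborFinset ⟨k, hkn⟩).map Fin.valEmbedding = N := by
    ext l
    simp only [mem_map, SimpleGraph.mem_neighborFinset, hN, Fin.valEmbedding_apply]
    exact ⟨by grind, fun hl ↦ ⟨⟨l, mem_range.1 (hNn hl)⟩, hl, rfl⟩⟩
  simpa [← hmap, sum_map, signlessLaplacian_mulVec_apply] using congrFun hq ⟨k, hkn⟩

lemma lollipop_adj_iff {u v : Fin n} : (lollipop n).Adj u v ↔
    u.val + v.val = 1 ∨ v.val = broomParent 2 u ∨ u.val = broomParent 2 v := by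
  simp only [lollipop, SimpleGraph.fromRel_adj, ne_eq, Fin.ext_iff, broomParent]
  omega

lemma isLollipopProfile_of_mulVec_eq_smul {q : ℝ} {g : ℕ → ℝ} (hn : 4 ≤ n) (hg : Monotone g)
    (hnonneg : 0 ≤ g 0) (hpos : 0 < g (n - 1)) (hlast : g n = g (n - 1))
    (hq : signlessLaplacian (lollipop n) *ᵥ lollipopVector n g = q • lollipopVector n g) :
    IsLollipopProfile n q g := by
  have hrow {k : ℕ} (hkn : k < n) (N : Finset ℕ) :=
    sum_add_eq_of_signlessLaplacian_mulVec_eq_smul (y := fun k ↦ lollipopSign k * g k) hq hkn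
      (N := N)
  have h0 := hrow (k := 0) (by omega) {1, 2} (by grind) (by grind [lollipop_adj_iff, broomParent])
  have h1 := hrow (k := 1) (by omega) {0, 2} (by grind) (by grind [lollipop_adj_iff, broomParent])
  have h2 := hrow (k := 2) (by omega) {0, 1, 3} (by grind)
    (by grind [lollipop_adj_iff, broomParent])
  norm_num [lollipopSign] at h0 h1 h2
  refine ⟨hg, hnonneg, hpos, hlast, by linarith, by linarith, by linarith, fun {k} hk hkn ↦ ?_⟩
  have hsign {k : ℕ} (hk : 2 ≤ k) : lollipopSign (k + 1) = -lollipopSign k := by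
    rw [← lollipopSign_broomParent, broomParent_of_le (by omega)]
  refine mul_left_cancel₀ (left_ne_zero_of_mul_eq_one (lollipopSign_mul_self k)) ?_
  obtain hlt | rfl : k + 2 < n ∨ n = k + 2 := by omega
  · have hrow := hrow hkn {k, k + 2} (by grind) (by grind [lollipop_adj_iff, broomParent])
    rw [sum_pair (by omega), hsign (by omega : 2 ≤ k + 1), hsign hk] at hrow
    linear_combination -hrow
  · have hrow := hrow hkn {k} (by grind) (by grind [lollipop_adj_iff, broomParent])
    rw [sum_singleton, hsign hk] at hrow
    rw [hlast, show k + 2 - 1 = k + 1 from rfl]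
    linear_combination -hrow

end LollipopEigenvector

lemma cstarRel_three_sub_four_iff {n a b : ℕ} (hn : 4 ≤ n) (hb : b < n) :
    cstarRel 3 (n - 4) a b ↔ a = 0 ∧ (b = 2 ∨ b = 3) ∨ b = a + 1 ∧ a ≠ 2 := by
  unfold cstarRel
  split_ifs <;> omega

lemma nonempty_lollipop_iso_Cstar {n : ℕ} (hn : 4 ≤ n) :
    Nonempty (lollipop n ≃g Cstar n 3 (n - 4)) := by
  let φ : Fin n ≃ Fin n := Equiv.swap ⟨0, by omega⟩ ⟨2, by omega⟩
  have hφ (u : Fin n) : (φ u).val = if u.val = 0 then 2 else if u.val = 2 then 0 else u.val := by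
    simp only [φ, Equiv.swap_apply_def, Fin.ext_iff]
    split_ifs <;> rfl
  refine ⟨φ, fun {u v} ↦ ?_⟩
  simp only [Cstar, SimpleGraph.fromRel_adj, lollipop_adj_iff, broomParent, φ.apply_eq_iff_eq,
    cstarRel_three_sub_four_iff hn (Fin.isLt _), ne_eq, Fin.ext_iff]
  have hu := hφ u
  have hv := hφ v
  split_ifs at hu hv <;> omega

section MinimalEigenvalue

variable {n : ℕ} {H : SimpleGraph (Fin n)} {x : Fin n → ℝ} {g : ℕ → ℝ}

lemma dotProduct_lollipopVector_self (hx : ∀ i, |x i| = g i) :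
    lollipopVector n g ⬝ᵥ lollipopVector n g = x ⬝ᵥ x := by
  refine sum_congr rfl fun i _ ↦ ?_
  rw [← abs_mul_abs_self (x i), hx, lollipopVector]
  linear_combination g i * g i * lollipopSign_mul_self i

lemma qmin_lollipop_mul_dotProduct_le (hn : 3 ≤ n) (hx : ∀ i, |x i| = g i) :
    qmin (lollipop n) * (x ⬝ᵥ x) ≤ lollipopForm n g := by
  rw [← dotProduct_lollipopVector_self hx,
    ← dotProduct_signlessLaplacian_mulVec_lollipopVector hn]
  exact qmin_mul_dotProduct_le _ _

lemma lollipopForm_le_qmin_mul_dotProduct (hH : H.Connected) (hbip : ¬ H.Colorable 2)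
    (hq : signlessLaplacian H *ᵥ x = qmin H • x) (hg : Monotone g) (hx : ∀ i, |x i| = g i) :
    lollipopForm n g ≤ qmin H * (x ⬝ᵥ x) :=
  (lollipopForm_le_dotProduct hH hbip hg hx).trans_eq
    (by rw [hq, dotProduct_smul, smul_eq_mul])

lemma qmin_lollipop_le (hn : 3 ≤ n) (hH : H.Connected) (hbip : ¬ H.Colorable 2) (hx₀ : x ≠ 0)
    (hq : signlessLaplacian H *ᵥ x = qmin H • x) (hg : Monotone g) (hx : ∀ i, |x i| = g i) :
    qmin (lollipop n) ≤ qmin H :=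
  le_of_mul_le_mul_right
    ((qmin_lollipop_mul_dotProduct_le hn hx).trans
      (lollipopForm_le_qmin_mul_dotProduct hH hbip hq hg hx))
    (by simpa using dotProduct_star_self_pos_iff.2 hx₀)

lemma eq_lollipop_of_qmin_eq (hn : 4 ≤ n) (hH : H.Connected) (hbip : ¬ H.Colorable 2)
    (hx₀ : x ≠ 0) (hq : signlessLaplacian H *ᵥ x = qmin H • x) (hg : Monotone g)
    (hx : ∀ i, |x i| = g i) (hlast : g n = g (n - 1)) (heq : qmin (lollipop n) = qmin H) :
    H = lollipop n := by
  have hform : lollipopForm n g = qmin (lollipop n) * (x ⬝ᵥ x) :=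
    (qmin_lollipop_mul_dotProduct_le (by omega) hx).antisymm'
      (heq ▸ lollipopForm_le_qmin_mul_dotProduct hH hbip hq hg hx)
  have hvector : signlessLaplacian (lollipop n) *ᵥ lollipopVector n g =
      qmin (lollipop n) • lollipopVector n g := by
    refine mulVec_eq_qmin_smul_of_dotProduct_eq ?_
    rw [dotProduct_signlessLaplacian_mulVec_lollipopVector (by omega), hform,
      dotProduct_lollipopVector_self hx]
  have hg0 : 0 ≤ g 0 := hx ⟨0, by omega⟩ ▸ abs_nonneg _
  have hpos : 0 < g (n - 1) := by
    obtain ⟨i, hi⟩ := Function.ne_iff.1 hx₀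
    exact (abs_pos.2 hi).trans_le (hx i ▸ hg (Nat.le_sub_one_of_lt i.isLt))
  have hprofile := isLollipopProfile_of_mulVec_eq_smul hn hg hg0 hpos hlast hvector
  refine eq_lollipop_of_dotProduct_le hH hbip hg hx (hprofile.zero_pos hn)
    (fun l ↦ hprofile.lt_broomParent hn) (le_of_eq ?_)
  rw [hq, dotProduct_smul, smul_eq_mul, hform, heq]

end MinimalEigenvalue

lemma exists_iso_fin_monotone_abs {V : Type*} [Fintype V] {n : ℕ} (hcard : Fintype.card V = n)
    (G : SimpleGraph V) (x : V → ℝ) :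
    ∃ (H : SimpleGraph (Fin n)) (φ : H ≃g G), Monotone fun i ↦ |x (φ i)| := by
  let e : Fin n ≃ V := (Fintype.equivFinOfCardEq hcard).symm
  let σ := Tuple.sort fun i ↦ |x (e i)|
  exact ⟨G.comap (σ.trans e), .comap (σ.trans e) G, Tuple.monotone_sort fun i ↦ |x (e i)|⟩

lemma exists_fin_extension_monotone {n : ℕ} (hn : 0 < n) {f : Fin n → ℝ} (hf : Monotone f) :
    ∃ g : ℕ → ℝ, Monotone g ∧ (∀ i, f i = g i) ∧ g n = g (n - 1) := by
  refine ⟨fun k ↦ f ⟨min k (n - 1), by omega⟩, fun k l hkl ↦ hf ?_, fun i ↦ ?_, ?_⟩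
  · exact min_le_min_right _ hkl
  · exact congrArg f (Fin.ext (min_eq_left (Nat.le_sub_one_of_lt i.isLt)).symm)
  · simp

theorem qmin_Cstar_min_unicyclic_small_general {V : Type*} [Fintype V] (n : ℕ) (hn4 : 4 ≤ n)
    (G : SimpleGraph V) (hcard : Fintype.card V = n) (hconn : G.Connected)
    (hnonbip : ¬ G.Colorable 2) :
    qmin (Cstar n 3 (n - 4)) ≤ qmin G ∧
      (qmin (Cstar n 3 (n - 4)) = qmin G ↔ Nonempty (G ≃g Cstar n 3 (n - 4))) := by
  have := hconn.nonempty
  obtain ⟨x, hx₀, hq⟩ := exists_signlessLaplacian_mulVec_eq_qmin_smul G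
  obtain ⟨H, φ, hmono⟩ := exists_iso_fin_monotone_abs hcard G x
  obtain ⟨g, hg, hxg, hlast⟩ := exists_fin_extension_monotone (by omega) hmono
  obtain ⟨ψ⟩ := nonempty_lollipop_iso_Cstar hn4
  have hH : H.Connected := φ.connected_iff.2 hconn
  have hbip : ¬ H.Colorable 2 := fun h ↦ hnonbip (h.of_hom φ.symm)
  have hxφ : x ∘ φ ≠ 0 := fun h ↦ hx₀ (φ.surjective.injective_comp_right h)
  have hqφ : signlessLaplacian H *ᵥ (x ∘ φ) = qmin H • (x ∘ φ) := by
    rw [signlessLaplacian_mulVec_comp_of_iso, hq, qmin_eq_of_iso φ]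
    rfl
  rw [← qmin_eq_of_iso φ, ← qmin_eq_of_iso ψ]
  refine ⟨qmin_lollipop_le (by omega) hH hbip hxφ hqφ hg hxg, fun heq ↦ ?_, fun ⟨χ⟩ ↦ ?_⟩
  · obtain rfl := eq_lollipop_of_qmin_eq hn4 hH hbip hxφ hqφ hg hxg hlast heq
    exact ⟨φ.symm.trans ψ⟩
  · exact qmin_eq_of_iso ((ψ.trans χ.symm).trans φ.symm)

/-- For `n ∈ {3γ-1, 3γ, 3γ+1}` (`γ ≥ 1`, `n ≥ 4`), among all connected nonbipartite
unicyclic graphs of order `n` with domination number `γ`, the least `Q`-eigenvalue is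
minimized uniquely by `C*_{3,n-4}`. -/
theorem qmin_Cstar_min_unicyclic_small
    {V : Type*} [Fintype V] (γ n : ℕ) (hγ : 1 ≤ γ) (hn4 : 4 ≤ n)
    (hn : n = 3 * γ - 1 ∨ n = 3 * γ ∨ n = 3 * γ + 1)
    (G : SimpleGraph V) (hcard : Fintype.card V = n)
    (hconn : G.Connected) (hnonbip : ¬ G.Colorable 2)
    (huni : G.edgeSet.ncard = n)
    (hdom : dominationNumber G = γ) :
    qmin (Cstar n 3 (n - 4)) ≤ qmin G ∧
      (qmin (Cstar n 3 (n - 4)) = qmin G ↔ Nonempty (G ≃g Cstar n 3 (n - 4))) :=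
  qmin_Cstar_min_unicyclic_small_general n hn4 G hcard hconn hnonbip
end
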